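/- arXiv:2008.10048 — 10 statements merged into one kernel-verified Lean document; each statement's English description precedes it below -/
import Mathlib

section
/- Quadratic majorization of super-Gaussian contrast functions: for all r > 0 and r₀ > 0, G(r) ≤ G′(r₀)·r²/(2r₀) + (G(r₀) − (r₀/2)·G′(r₀)), with equality when r = r₀. -/
/-- Quadratic majorization of spherical super-Gaussian contrast functions:
if `G : ℝ → ℝ` has derivative `G'` on `(0,∞)`, and `r ↦ G' r / r` is continuous
and monotonically non-increasing on `(0,∞)`, then for all `r > 0` and `r₀ > 0`,
`G r ≤ G' r₀ * r ^ 2 / (2 * r₀) + (G r₀ - r₀ / 2 * G' r₀)`, with equality when `r = r₀`. -/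
theorem superGaussian_quadratic_majorization
    (G G' : ℝ → ℝ)
    (hderiv : ∀ r : ℝ, 0 < r → HasDerivAt G (G' r) r)
    (hcont : ContinuousOn (fun r => G' r / r) (Set.Ioi (0 : ℝ)))
    (hantitone : AntitoneOn (fun r => G' r / r) (Set.Ioi (0 : ℝ))) :
    ∀ r : ℝ, 0 < r → ∀ r₀ : ℝ, 0 < r₀ →
      (G r ≤ G' r₀ * r ^ 2 / (2 * r₀) + (G r₀ - r₀ / 2 * G' r₀)) ∧
      (r = r₀ → G r = G' r₀ * r ^ 2 / (2 * r₀) + (G r₀ - r₀ / 2 * G' r₀)) := by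
  intro r hr r₀ hr₀
  have hd : ∀ x : ℝ, 0 < x → HasDerivAt (fun x => G x - G' r₀ / r₀ * x ^ 2 / 2)
      (G' x - G' r₀ / r₀ * x) x := by
    intro x hx
    have h := (hderiv x hx).sub ((((hasDerivAt_id x).pow 2).const_mul (G' r₀ / r₀)).div_const 2)
    refine HasDerivAt.congr_deriv (f := fun x => G x - G' r₀ / r₀ * x ^ 2 / 2) h ?_
    simp only [id]
    push_cast
    ring
  have hmul : ∀ x : ℝ, 0 < x → G' x = G' x / x * x := by
    intro x hx
    field_simp
  have key : ∀ a b : ℝ, 0 < a → a < b → ∃ c ∈ Set.Ioo a b, G' c - G' r₀ / r₀ * c =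
      ((G b - G' r₀ / r₀ * b ^ 2 / 2) - (G a - G' r₀ / r₀ * a ^ 2 / 2)) / (b - a) := by
    intro a b ha hab
    exact exists_hasDerivAt_eq_slope (fun x => G x - G' r₀ / r₀ * x ^ 2 / 2) _ hab
      (fun x hx => (hd x (ha.trans_le hx.1)).continuousAt.continuousWithinAt)
      (fun x hx => hd x (ha.trans hx.1))
  have e1 : G' r₀ * r ^ 2 / (2 * r₀) = G' r₀ / r₀ * r ^ 2 / 2 := by
    field_simp
  have e2 : r₀ / 2 * G' r₀ = G' r₀ / r₀ * r₀ ^ 2 / 2 := by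
    field_simp
  rw [e1, e2]
  refine ⟨?_, ?_⟩
  · rcases lt_trichotomy r r₀ with h | h | h
    · obtain ⟨c, hc, hs⟩ := key r r₀ hr h
      have hc0 : 0 < c := hr.trans hc.1
      have hle : G' r₀ / r₀ ≤ G' c / c := hantitone hc0 hr₀ hc.2.le
      have h1 := mul_le_mul_of_nonneg_right hle hc0.le
      rw [← hmul c hc0] at h1
      rw [eq_div_iff (by linarith)] at hs
      have := mul_nonneg (sub_nonneg.2 h1) (sub_nonneg.2 h.le)
      linarith
    · subst h
      linarith
    · obtain ⟨c, hc, hs⟩ := key r₀ r hr₀ h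
      have hc0 : 0 < c := hr₀.trans hc.1
      have hle : G' c / c ≤ G' r₀ / r₀ := hantitone hr₀ hc0 hc.1.le
      have h1 := mul_le_mul_of_nonneg_right hle hc0.le
      rw [← hmul c hc0] at h1
      rw [eq_div_iff (by linarith)] at hs
      have := mul_nonneg (sub_nonneg.2 h1) (sub_nonneg.2 h.le)
      linarith
  · rintro rfl
    ring
end

section
/- Global minimizer of the LQPQM in the general case (Theorem 3): suppose U v ≠ 0, and let λ* ∈ ℝ satisfy λ* > z, λ*·I − U positive definite, and λ* = (λ*)² · v^H (λ*·I − U)^{-1} U (λ*·I − U)^{-1} v + z. Then y* = (λ*·I − U)^{-1} U v satisfies F(y*) ≤ F(y) for every y ∈ ℂ^d with (y + v)^H U (y + v) + z > 0; moreover (y* + v)^H U (y* + v) + z = λ*. -/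
open Matrix ComplexOrder

/-- Global minimizer of the LQPQM in the general case (Theorem 3): if `U v ≠ 0` and
`λ* > z` is such that `λ* I - U` is positive definite and `λ*` satisfies the secular
equation `λ* = λ*² v^H (λ* I - U)⁻¹ U (λ* I - U)⁻¹ v + z`, then
`y* = (λ* I - U)⁻¹ U v` globally minimizes the LQPQM objective
`F(y) = ‖y‖² - log((y+v)^H U (y+v) + z)` over all `y` where the logarithm argument is
positive, and moreover `(y* + v)^H U (y* + v) + z = λ*`. -/
theorem lqpqm_global_minimizer_general {d : ℕ} (hd : 1 ≤ d)
    (U : Matrix (Fin d) (Fin d) ℂ) (hU : U.PosSemidef)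
    (v : Fin d → ℂ) (z : ℝ) (hz : 0 ≤ z)
    (hUv : U *ᵥ v ≠ 0)
    (lam : ℝ) (hlam_z : z < lam)
    (hlam_pd : ((lam : ℂ) • (1 : Matrix (Fin d) (Fin d) ℂ) - U).PosDef)
    (hlam_eq : lam =
      lam ^ 2 *
        (star v ⬝ᵥ (((lam : ℂ) • (1 : Matrix (Fin d) (Fin d) ℂ) - U)⁻¹ *ᵥ
          (U *ᵥ (((lam : ℂ) • (1 : Matrix (Fin d) (Fin d) ℂ) - U)⁻¹ *ᵥ v)))).re + z) :
    letI ystar : Fin d → ℂ :=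
      ((lam : ℂ) • (1 : Matrix (Fin d) (Fin d) ℂ) - U)⁻¹ *ᵥ (U *ᵥ v)
    (∀ y : Fin d → ℂ,
        0 < (star (y + v) ⬝ᵥ (U *ᵥ (y + v))).re + z →
        (star ystar ⬝ᵥ ystar).re
            - Real.log ((star (ystar + v) ⬝ᵥ (U *ᵥ (ystar + v))).re + z)
          ≤ (star y ⬝ᵥ y).re - Real.log ((star (y + v) ⬝ᵥ (U *ᵥ (y + v))).re + z)) ∧
    (star (ystar + v) ⬝ᵥ (U *ᵥ (ystar + v))).re + z = lam := by
  have hl : 0 < lam := lt_of_le_of_lt hz hlam_z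
  set M := (lam : ℂ) • (1 : Matrix (Fin d) (Fin d) ℂ) - U with hM
  generalize hy0 : M⁻¹ *ᵥ (U *ᵥ v) = ystar
  have hdet : IsUnit M.det := (Matrix.isUnit_iff_isUnit_det _).1 hlam_pd.isUnit
  have hMv : ∀ x, M *ᵥ x = (lam : ℂ) • x - U *ᵥ x := by
    intro x; rw [hM, sub_mulVec, smul_mulVec, one_mulVec]
  set w := M⁻¹ *ᵥ v with hw
  have hMw : M *ᵥ w = v := by
    rw [hw, mulVec_mulVec, mul_nonsing_inv _ hdet, one_mulVec]
  have hv : v = (lam : ℂ) • w - U *ᵥ w := by rw [← hMv, hMw]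
  have hys : ystar = U *ᵥ w := by
    have h1 : U *ᵥ v = M *ᵥ (U *ᵥ w) := by
      rw [hMv, hv, mulVec_sub, mulVec_smul]
    rw [← hy0, h1, mulVec_mulVec, nonsing_inv_mul _ hdet, one_mulVec]
  have hyv : ystar + v = (lam : ℂ) • w := by
    rw [hys]; exact (eq_sub_iff_add_eq'.1 hv)
  have hsym : ∀ a b : Fin d → ℂ, star a ⬝ᵥ (U *ᵥ b) = star (U *ᵥ a) ⬝ᵥ b := by
    intro a b
    rw [star_mulVec, hU.1.eq, dotProduct_mulVec]
  have hconj : ∀ a b : Fin d → ℂ, (star a ⬝ᵥ b).re = (star b ⬝ᵥ a).re := by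
    intro a b
    have h : star b ⬝ᵥ a = star (star a ⬝ᵥ b) := by
      rw [star_dotProduct]
    rw [h]; simp
  have hsec : star v ⬝ᵥ (M⁻¹ *ᵥ (U *ᵥ w)) = star w ⬝ᵥ (U *ᵥ w) := by
    rw [dotProduct_mulVec, hw, star_mulVec, hlam_pd.1.inv.eq]
  rw [hsec] at hlam_eq
  have hq : (star (ystar + v) ⬝ᵥ (U *ᵥ (ystar + v))).re + z = lam := by
    rw [hyv, mulVec_smul, star_smul, smul_dotProduct, dotProduct_smul]
    simp only [smul_eq_mul, Complex.star_def, Complex.conj_ofReal, Complex.re_ofReal_mul]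
    linarith
  refine ⟨?_, hq⟩
  intro y hy
  rw [hq]
  obtain ⟨h, rfl⟩ : ∃ h, y = ystar + h := ⟨y - ystar, by abel⟩
  have hpos : 0 ≤ lam * (star h ⬝ᵥ h).re - (star h ⬝ᵥ (U *ᵥ h)).re := by
    have := hlam_pd.posSemidef.re_dotProduct_nonneg h
    rw [hMv, dotProduct_sub, dotProduct_smul] at this
    simpa using this
  have e1 : (star (ystar + h) ⬝ᵥ (ystar + h)).re
      = (star ystar ⬝ᵥ ystar).re + 2 * (star h ⬝ᵥ ystar).re + (star h ⬝ᵥ h).re := by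
    rw [star_add, add_dotProduct, dotProduct_add, dotProduct_add]
    simp only [Complex.add_re]
    rw [hconj ystar h]; ring
  have e2 : (star (ystar + h + v) ⬝ᵥ (U *ᵥ (ystar + h + v))).re
      = (star (ystar + v) ⬝ᵥ (U *ᵥ (ystar + v))).re
        + 2 * (star h ⬝ᵥ (U *ᵥ (ystar + v))).re + (star h ⬝ᵥ (U *ᵥ h)).re := by
    rw [add_right_comm, star_add (ystar + v) h, mulVec_add U (ystar + v) h, add_dotProduct,
      dotProduct_add, dotProduct_add]
    simp only [Complex.add_re]
    rw [hsym (ystar + v) h, hconj (U *ᵥ (ystar + v)) h]; ring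
  have e3 : (star h ⬝ᵥ (U *ᵥ (ystar + v))).re = lam * (star h ⬝ᵥ ystar).re := by
    rw [hyv, mulVec_smul, ← hys, dotProduct_smul]
    simp
  set t := (star (ystar + h + v) ⬝ᵥ (U *ᵥ (ystar + h + v))).re + z with ht
  have hlog := Real.log_le_sub_one_of_pos (div_pos hy hl)
  rw [Real.log_div hy.ne' hl.ne'] at hlog
  have hkey : t / lam - 1 ≤ 2 * (star h ⬝ᵥ ystar).re + (star h ⬝ᵥ h).re := by
    rw [sub_le_iff_le_add, div_le_iff₀ hl]
    nlinarith
  linarith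
end

section
/- Special case of LQPQM with zero offset, first alternative (Theorem 2, case 1): if z > 0 and z ≥ λ_max, where λ_max is the largest eigenvalue of U, then F₀(0) = −log z and F₀(y) > −log z for every y ∈ ℂ^d with y ≠ 0; that is, y = 0 is the unique global minimizer of F₀. -/
open Matrix ComplexOrder

/-- Special case of LQPQM with zero offset, first alternative (Theorem 2, case 1):
if `z > 0` and `z ≥ λ_max`, the largest eigenvalue of `U`, then for
`F₀(y) = ‖y‖² - log(y^H U y + z)` one has `F₀(0) = -log z` and `F₀(y) > -log z` for
every `y ≠ 0`; that is, `y = 0` is the unique global minimizer of `F₀`. -/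
theorem lqpqm_zero_offset_case1 {d : ℕ} (hd : 1 ≤ d)
    (U : Matrix (Fin d) (Fin d) ℂ) (hU : U.PosSemidef)
    (z : ℝ) (hz : 0 < z)
    (lammax : ℝ)
    (hgreatest : IsGreatest
      {μ : ℝ | ∃ x : Fin d → ℂ, x ≠ 0 ∧ U *ᵥ x = (μ : ℂ) • x} lammax)
    (hzlam : lammax ≤ z) :
    ((star (0 : Fin d → ℂ) ⬝ᵥ (0 : Fin d → ℂ)).re
        - Real.log ((star (0 : Fin d → ℂ) ⬝ᵥ (U *ᵥ (0 : Fin d → ℂ))).re + z)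
      = -Real.log z) ∧
    (∀ y : Fin d → ℂ, y ≠ 0 →
      -Real.log z <
        (star y ⬝ᵥ y).re - Real.log ((star y ⬝ᵥ (U *ᵥ y)).re + z)) := by
  have hB : (((z : ℂ) • (1 : Matrix (Fin d) (Fin d) ℂ)) - U).PosSemidef := by
    have hH : (((z : ℂ) • (1 : Matrix (Fin d) (Fin d) ℂ)) - U).IsHermitian := by
      refine Matrix.IsHermitian.sub ?_ hU.isHermitian
      simp [Matrix.IsHermitian, Matrix.conjTranspose_smul]
    rw [hH.posSemidef_iff_eigenvalues_nonneg]
    intro i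
    have h1 := hH.mulVec_eigenvectorBasis i
    have h2 : z - hH.eigenvalues i ≤ lammax := by
      apply hgreatest.2
      refine ⟨⇑(hH.eigenvectorBasis i), ?_, ?_⟩
      · intro h0
        apply hH.eigenvectorBasis.orthonormal.ne_zero i
        ext j
        exact congrFun h0 j
      · rw [Matrix.sub_mulVec, Matrix.smul_mulVec, Matrix.one_mulVec] at h1
        ext j
        have h3 := congrFun h1 j
        simp at h3 ⊢
        linear_combination -h3
    simp only [Pi.zero_apply]
    linarith
  refine ⟨by simp, fun y hy => ?_⟩
  have hn : 0 < (star y ⬝ᵥ y).re :=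
    (Complex.pos_iff.1 (Matrix.dotProduct_star_self_pos_iff.2 hy)).1
  have hq : 0 ≤ (star y ⬝ᵥ (U *ᵥ y)).re :=
    (Complex.nonneg_iff.1 (hU.dotProduct_mulVec_nonneg y)).1
  have hb := (Complex.nonneg_iff.1 (hB.dotProduct_mulVec_nonneg y)).1
  rw [Matrix.sub_mulVec, Matrix.smul_mulVec, Matrix.one_mulVec, dotProduct_sub,
    dotProduct_smul, smul_eq_mul, Complex.sub_re, Complex.re_ofReal_mul] at hb
  set n := (star y ⬝ᵥ y).re
  set q := (star y ⬝ᵥ (U *ᵥ y)).re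
  have h1 : Real.log (q + z) ≤ Real.log (z * (1 + n)) :=
    Real.log_le_log (by linarith) (by linarith)
  rw [Real.log_mul hz.ne' (by linarith)] at h1
  have h2 := Real.log_lt_sub_one_of_pos (x := 1 + n) (by linarith) (by linarith)
  linarith
end

section
/- Special case of LQPQM with zero offset, second alternative (Theorem 2, case 2): if 0 ≤ z < λ_max, where λ_max is the largest eigenvalue of U, and σ ∈ ℂ^d is a unit-norm eigenvector of U for λ_max, then y* = sqrt((λ_max − z)/λ_max) · σ satisfies y*^H U y* + z = λ_max, F₀(y*) = (λ_max − z)/λ_max − log λ_max, and F₀(y) ≥ F₀(y*) for every y ∈ ℂ^d with y^H U y + z > 0. -/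
open Matrix ComplexOrder

theorem rayleigh_aux {d : ℕ} (U : Matrix (Fin d) (Fin d) ℂ) (hU : U.PosSemidef) (l : ℝ)
    (hl : ∀ μ : ℝ, (∃ x : Fin d → ℂ, x ≠ 0 ∧ U *ᵥ x = (μ : ℂ) • x) → μ ≤ l) (y : Fin d → ℂ) :
    (star y ⬝ᵥ (U *ᵥ y)).re ≤ l * (star y ⬝ᵥ y).re := by
  have hB : ((l : ℂ) • (1 : Matrix (Fin d) (Fin d) ℂ) - U).IsHermitian := by
    apply Matrix.IsHermitian.sub _ hU.1
    rw [Matrix.IsHermitian, Matrix.conjTranspose_smul]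
    simp
  have hP : ((l : ℂ) • (1 : Matrix (Fin d) (Fin d) ℂ) - U).PosSemidef := by
    rw [hB.posSemidef_iff_eigenvalues_nonneg]
    intro j
    have hv := hB.mulVec_eigenvectorBasis j
    have hn : (hB.eigenvectorBasis j).ofLp ≠ 0 := by
      intro h
      apply hB.eigenvectorBasis.toBasis.ne_zero j
      ext i
      simpa using congrFun h i
    have := hl (l - hB.eigenvalues j) ⟨_, hn, by
      rw [Matrix.sub_mulVec, Matrix.smul_mulVec, Matrix.one_mulVec] at hv
      ext i
      have h2 := congrFun hv i
      simp at h2 ⊢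
      linear_combination -h2⟩
    simp only [Pi.zero_apply]
    linarith
  have h := (Complex.le_def.1 (hP.dotProduct_mulVec_nonneg y)).1
  rw [Matrix.sub_mulVec, Matrix.smul_mulVec, Matrix.one_mulVec, dotProduct_sub,
    dotProduct_smul] at h
  simp only [Complex.zero_re, Complex.sub_re, smul_eq_mul, Complex.re_ofReal_mul] at h
  linarith

/-- Special case of LQPQM with zero offset, second alternative (Theorem 2, case 2):
if `0 ≤ z < λ_max`, the largest eigenvalue of `U`, and `σ` is a unit-norm eigenvector of
`U` for `λ_max`, then `y* = sqrt((λ_max - z)/λ_max) σ` satisfies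
`y*^H U y* + z = λ_max`, `F₀(y*) = (λ_max - z)/λ_max - log λ_max`, and `F₀(y) ≥ F₀(y*)`
for every `y` with `y^H U y + z > 0`, where `F₀(y) = ‖y‖² - log(y^H U y + z)`. -/
theorem lqpqm_zero_offset_case2 {d : ℕ} (hd : 1 ≤ d)
    (U : Matrix (Fin d) (Fin d) ℂ) (hU : U.PosSemidef)
    (z : ℝ) (hz : 0 ≤ z)
    (lammax : ℝ)
    (hgreatest : IsGreatest
      {μ : ℝ | ∃ x : Fin d → ℂ, x ≠ 0 ∧ U *ᵥ x = (μ : ℂ) • x} lammax)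
    (hzlam : z < lammax)
    (σ : Fin d → ℂ) (hσ_eig : U *ᵥ σ = (lammax : ℂ) • σ) (hσ_norm : star σ ⬝ᵥ σ = 1) :
    letI ystar : Fin d → ℂ := (Real.sqrt ((lammax - z) / lammax) : ℂ) • σ
    ((star ystar ⬝ᵥ (U *ᵥ ystar)).re + z = lammax) ∧
    ((star ystar ⬝ᵥ ystar).re - Real.log ((star ystar ⬝ᵥ (U *ᵥ ystar)).re + z)
      = (lammax - z) / lammax - Real.log lammax) ∧
    (∀ y : Fin d → ℂ, 0 < (star y ⬝ᵥ (U *ᵥ y)).re + z →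
      (star ystar ⬝ᵥ ystar).re - Real.log ((star ystar ⬝ᵥ (U *ᵥ ystar)).re + z)
        ≤ (star y ⬝ᵥ y).re - Real.log ((star y ⬝ᵥ (U *ᵥ y)).re + z)) := by
  have hl : 0 < lammax := lt_of_le_of_lt hz hzlam
  have hs : (Real.sqrt ((lammax - z) / lammax)) * (Real.sqrt ((lammax - z) / lammax))
      = (lammax - z) / lammax := Real.mul_self_sqrt (div_nonneg (by linarith) hl.le)
  generalize Real.sqrt ((lammax - z) / lammax) = s at hs
  have h1 : (star ((s : ℂ) • σ) ⬝ᵥ ((s : ℂ) • σ)).re = (lammax - z) / lammax := by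
    rw [star_smul, smul_dotProduct, dotProduct_smul, hσ_norm, ← hs]
    simp
  have h2 : (star ((s : ℂ) • σ) ⬝ᵥ (U *ᵥ ((s : ℂ) • σ))).re + z = lammax := by
    rw [mulVec_smul, hσ_eig, smul_comm, dotProduct_smul, smul_eq_mul, Complex.re_ofReal_mul, h1]
    field_simp
    ring
  refine ⟨h2, by rw [h1, h2], ?_⟩
  intro y hy
  rw [h1, h2]
  have hr := rayleigh_aux U hU lammax (fun μ h => hgreatest.2 h) y
  generalize (star y ⬝ᵥ (U *ᵥ y)).re = q at *
  generalize (star y ⬝ᵥ y).re = a at *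
  have h3 := Real.log_le_sub_one_of_pos (div_pos hy hl)
  rw [Real.log_div hy.ne' hl.ne'] at h3
  have h4 : q / lammax ≤ a := by rw [div_le_iff₀ hl]; linarith
  have h5 : (lammax - z) / lammax = 1 - z / lammax := by field_simp
  rw [add_div] at h3
  linarith
end

section
/- Objective value at a stationary point (Lemma 5): if λ > 0 is such that λ·I − U is invertible and y ∈ ℂ^d satisfies the first-order conditions U(y + v) = λ y and λ = (y + v)^H U (y + v) + z, then F(y) = 1 − v^H U (λ·I − U)^{-1} v − z/λ − log λ. -/
open Matrix ComplexOrder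

/-- Objective value at a stationary point (Lemma 5): if `λ > 0`, `λ I - U` is
invertible, and `y` satisfies the first-order conditions `U(y+v) = λ y` and
`λ = (y+v)^H U (y+v) + z`, then the LQPQM objective
`F(y) = ‖y‖² - log((y+v)^H U (y+v) + z)` equals
`1 - v^H U (λ I - U)⁻¹ v - z/λ - log λ`. -/
theorem lqpqm_objective_at_stationary_point {d : ℕ} (hd : 1 ≤ d)
    (U : Matrix (Fin d) (Fin d) ℂ) (hU : U.PosSemidef)
    (v : Fin d → ℂ) (z : ℝ) (hz : 0 ≤ z)
    (lam : ℝ) (hlam : 0 < lam)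
    (hinv : IsUnit ((lam : ℂ) • (1 : Matrix (Fin d) (Fin d) ℂ) - U))
    (y : Fin d → ℂ)
    (hfoc1 : U *ᵥ (y + v) = (lam : ℂ) • y)
    (hfoc2 : lam = (star (y + v) ⬝ᵥ (U *ᵥ (y + v))).re + z) :
    (star y ⬝ᵥ y).re - Real.log ((star (y + v) ⬝ᵥ (U *ᵥ (y + v))).re + z)
      = 1 - (star v ⬝ᵥ (U *ᵥ (((lam : ℂ) • (1 : Matrix (Fin d) (Fin d) ℂ) - U)⁻¹ *ᵥ v))).re
        - z / lam - Real.log lam := by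
  have hl : (lam : ℂ) ≠ 0 := by exact_mod_cast hlam.ne'
  have hdet := (Matrix.isUnit_iff_isUnit_det _).mp hinv
  have h1 : ((lam : ℂ) • (1 : Matrix (Fin d) (Fin d) ℂ) - U) *ᵥ (y + v) = (lam : ℂ) • v := by
    rw [Matrix.sub_mulVec, hfoc1, Matrix.smul_mulVec, Matrix.one_mulVec, smul_add]
    abel
  have h2 : (lam : ℂ) • (((lam : ℂ) • (1 : Matrix (Fin d) (Fin d) ℂ) - U)⁻¹ *ᵥ v) = y + v := by
    rw [← Matrix.mulVec_smul, ← h1, Matrix.mulVec_mulVec, Matrix.nonsing_inv_mul _ hdet,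
      Matrix.one_mulVec]
  have h3 : U *ᵥ (((lam : ℂ) • (1 : Matrix (Fin d) (Fin d) ℂ) - U)⁻¹ *ᵥ v) = y := by
    have h4 := hfoc1
    rw [← h2, Matrix.mulVec_smul] at h4
    exact smul_right_injective _ hl h4
  rw [← hfoc2, h3]
  rw [hfoc1, dotProduct_smul, star_add, add_dotProduct, smul_eq_mul, Complex.re_ofReal_mul,
    Complex.add_re] at hfoc2
  have h5 : z / lam = 1 - ((star y ⬝ᵥ y).re + (star v ⬝ᵥ y).re) := by
    rw [div_eq_iff hlam.ne']
    linarith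
  rw [h5]
  ring
end

section
/- Stationary points of the LQPQM satisfy the secular equation: if λ ∈ ℝ is such that λ·I − U is invertible and y ∈ ℂ^d satisfies U(y + v) = λ y and λ = (y + v)^H U (y + v) + z, then y = (λ·I − U)^{-1} U v and λ = λ² · v^H (λ·I − U)^{-1} U (λ·I − U)^{-1} v + z. -/
open Matrix ComplexOrder

/-- Stationary points of the LQPQM satisfy the secular equation: if `λ I - U` is
invertible and `y` satisfies `U(y+v) = λ y` and `λ = (y+v)^H U (y+v) + z`, then
`y = (λ I - U)⁻¹ U v` and `λ = λ² v^H (λ I - U)⁻¹ U (λ I - U)⁻¹ v + z`. -/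
theorem lqpqm_stationary_secular {d : ℕ} (hd : 1 ≤ d)
    (U : Matrix (Fin d) (Fin d) ℂ) (hU : U.PosSemidef)
    (v : Fin d → ℂ) (z : ℝ) (hz : 0 ≤ z)
    (lam : ℝ)
    (hinv : IsUnit ((lam : ℂ) • (1 : Matrix (Fin d) (Fin d) ℂ) - U))
    (y : Fin d → ℂ)
    (hfoc1 : U *ᵥ (y + v) = (lam : ℂ) • y)
    (hfoc2 : lam = (star (y + v) ⬝ᵥ (U *ᵥ (y + v))).re + z) :
    y = ((lam : ℂ) • (1 : Matrix (Fin d) (Fin d) ℂ) - U)⁻¹ *ᵥ (U *ᵥ v) ∧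
    lam = lam ^ 2 *
        (star v ⬝ᵥ (((lam : ℂ) • (1 : Matrix (Fin d) (Fin d) ℂ) - U)⁻¹ *ᵥ
          (U *ᵥ (((lam : ℂ) • (1 : Matrix (Fin d) (Fin d) ℂ) - U)⁻¹ *ᵥ v)))).re + z := by
  have hdet := (Matrix.isUnit_iff_isUnit_det _).mp hinv
  have hMy : ∀ x : Fin d → ℂ, ((lam : ℂ) • (1 : Matrix (Fin d) (Fin d) ℂ) - U) *ᵥ x
      = (lam : ℂ) • x - U *ᵥ x := by
    intro x
    rw [Matrix.sub_mulVec, Matrix.smul_mulVec, Matrix.one_mulVec]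
  have hH : ((lam : ℂ) • (1 : Matrix (Fin d) (Fin d) ℂ) - U)ᴴ
      = (lam : ℂ) • (1 : Matrix (Fin d) (Fin d) ℂ) - U := by
    rw [Matrix.conjTranspose_sub, Matrix.conjTranspose_smul, hU.isHermitian.eq]
    simp
  generalize (lam : ℂ) • (1 : Matrix (Fin d) (Fin d) ℂ) - U = M at *
  have hcancel : ∀ x : Fin d → ℂ, M⁻¹ *ᵥ (M *ᵥ x) = x := by
    intro x
    rw [Matrix.mulVec_mulVec, Matrix.nonsing_inv_mul _ hdet, Matrix.one_mulVec]
  have h1 : M *ᵥ y = U *ᵥ v := by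
    rw [hMy, ← hfoc1, Matrix.mulVec_add]
    abel
  have h2 : M *ᵥ (y + v) = (lam : ℂ) • v := by
    rw [hMy, hfoc1, smul_add]
    abel
  have h3 : y + v = (lam : ℂ) • (M⁻¹ *ᵥ v) := by
    rw [← Matrix.mulVec_smul, ← h2, hcancel]
  refine ⟨by rw [← h1, hcancel], ?_⟩
  have h4 : star (M⁻¹ *ᵥ v) = star v ᵥ* M⁻¹ := by
    rw [Matrix.star_mulVec, Matrix.conjTranspose_nonsing_inv, hH]
  have h5 : star (y + v) ⬝ᵥ (U *ᵥ (y + v))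
      = ((lam ^ 2 : ℝ) : ℂ) * (star v ⬝ᵥ (M⁻¹ *ᵥ (U *ᵥ (M⁻¹ *ᵥ v)))) := by
    rw [h3, star_smul, h4, Matrix.mulVec_smul, smul_dotProduct, dotProduct_smul,
      ← Matrix.dotProduct_mulVec]
    simp
    ring
  rw [h5, Complex.re_ofReal_mul] at hfoc2
  exact hfoc2
end

section
/- At most two roots between consecutive poles (Lemma 6, parts 2 and 3): for every λ > 0 with λ ∉ {φ_m : m ∈ S}, f is twice differentiable at λ with f″(λ) = 2 Σ_{m∈S} c_m φ_m (2λ + φ_m)/(λ − φ_m)⁴ > 0; consequently, for any 0 ≤ a < b such that the open interval (a, b) contains no φ_m, the set {λ ∈ (a,b) : f(λ) = 0} has at most two elements. -/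
lemma aux_d1 {ι : Type*} [Fintype ι] (φ c : ι → ℝ) (z x : ℝ) (hx : ∀ m, x ≠ φ m) :
    HasDerivAt (fun lam : ℝ => lam ^ 2 * ∑ m, c m / (lam - φ m) ^ 2 - lam + z)
      (∑ m, (-2 * c m * φ m * x / (x - φ m) ^ 3) - 1) x := by
  have h : ∀ m ∈ (Finset.univ : Finset ι), HasDerivAt (fun lam : ℝ => lam ^ 2 * (c m / (lam - φ m) ^ 2))
      (-2 * c m * φ m * x / (x - φ m) ^ 3) x := by
    intro m _
    have hne : x - φ m ≠ 0 := sub_ne_zero.mpr (hx m)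
    have h1 : HasDerivAt (fun lam : ℝ => (lam - φ m) ^ 2) _ x :=
      ((hasDerivAt_id' x).sub_const (φ m)).pow 2
    have h2 := (((hasDerivAt_id' x).pow 2)).mul ((hasDerivAt_const x (c m)).div h1 (pow_ne_zero 2 hne))
    refine h2.congr_deriv ?_
    simp
    field_simp
    ring
  have h3 := ((HasDerivAt.fun_sum h).sub (hasDerivAt_id' x)).add_const z
  refine h3.congr_of_eventuallyEq (Filter.Eventually.of_forall fun y => ?_)
  simp [Finset.mul_sum]

lemma aux_d2 {ι : Type*} [Fintype ι] (φ c : ι → ℝ) (x : ℝ) (hx : ∀ m, x ≠ φ m) :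
    HasDerivAt (fun x : ℝ => ∑ m, (-2 * c m * φ m * x / (x - φ m) ^ 3) - 1)
      (2 * ∑ m, c m * φ m * (2 * x + φ m) / (x - φ m) ^ 4) x := by
  rw [Finset.mul_sum]
  refine (HasDerivAt.fun_sum ?_).sub_const 1
  intro m _
  have hne : x - φ m ≠ 0 := sub_ne_zero.mpr (hx m)
  have h1 : HasDerivAt (fun lam : ℝ => (lam - φ m) ^ 3) _ x :=
    ((hasDerivAt_id' x).sub_const (φ m)).pow 3
  have h2 := ((hasDerivAt_id' x).const_mul (-2 * c m * φ m)).div h1 (pow_ne_zero 3 hne)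
  refine h2.congr_deriv ?_
  simp
  field_simp
  ring

lemma aux_pos {ι : Type*} [Fintype ι] [Nonempty ι] (φ c : ι → ℝ) (hφ : ∀ m, 0 < φ m)
    (hc : ∀ m, 0 < c m) (x : ℝ) (h0 : 0 < x) (hx : ∀ m, x ≠ φ m) :
    0 < 2 * ∑ m, c m * φ m * (2 * x + φ m) / (x - φ m) ^ 4 := by
  refine mul_pos two_pos (Finset.sum_pos (fun m _ => ?_) Finset.univ_nonempty)
  have hne : x - φ m ≠ 0 := sub_ne_zero.mpr (hx m)
  have := hφ m
  have := hc m
  positivity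

/-- At most two roots of the secular function between consecutive poles
(Lemma 6, parts 2 and 3): for every `λ > 0` avoiding the poles, `f` is twice
differentiable at `λ` with
`f''(λ) = 2 Σ_m c_m φ_m (2λ + φ_m)/(λ - φ_m)⁴ > 0`; consequently, any open interval
`(a, b)` with `0 ≤ a < b` containing no pole `φ_m` contains at most two roots of `f`. -/
theorem secular_convex_between_poles {ι : Type*} [Fintype ι] [Nonempty ι]
    (φ c : ι → ℝ) (hφ : ∀ m, 0 < φ m) (hc : ∀ m, 0 < c m)
    (z : ℝ) (hz : 0 ≤ z) :
    letI f : ℝ → ℝ := fun lam => lam ^ 2 * ∑ m, c m / (lam - φ m) ^ 2 - lam + z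
    (∀ lam : ℝ, 0 < lam → (∀ m, lam ≠ φ m) →
        HasDerivAt (deriv f)
          (2 * ∑ m, c m * φ m * (2 * lam + φ m) / (lam - φ m) ^ 4) lam ∧
        0 < 2 * ∑ m, c m * φ m * (2 * lam + φ m) / (lam - φ m) ^ 4) ∧
    (∀ a b : ℝ, 0 ≤ a → a < b → (∀ m, φ m ∉ Set.Ioo a b) →
        Set.encard {lam : ℝ | lam ∈ Set.Ioo a b ∧ f lam = 0} ≤ 2) := by
  refine ⟨fun x h0 hx => ⟨?_, aux_pos φ c hφ hc x h0 hx⟩, ?_⟩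
  · refine (aux_d2 φ c x hx).congr_of_eventuallyEq ?_
    have : ∀ᶠ y in nhds x, ∀ m, y ≠ φ m :=
      Filter.eventually_all.mpr fun m => isOpen_ne.mem_nhds (hx m)
    filter_upwards [this] with y hy
    exact (aux_d1 φ c z y hy).deriv
  · intro a b ha hab hI
    have hav : ∀ x ∈ Set.Ioo a b, ∀ m, x ≠ φ m := fun x hx m h => hI m (h ▸ hx)
    have key : ∀ x y w : ℝ, x ∈ Set.Ioo a b → w ∈ Set.Ioo a b → x < y → y < w →
        (x ^ 2 * ∑ m, c m / (x - φ m) ^ 2 - x + z = 0) →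
        (y ^ 2 * ∑ m, c m / (y - φ m) ^ 2 - y + z = 0) →
        (w ^ 2 * ∑ m, c m / (w - φ m) ^ 2 - w + z = 0) → False := by
      intro x y w hx hw hxy hyw fx fy fw
      have hy : y ∈ Set.Ioo a b := ⟨hx.1.trans hxy, hyw.trans hw.2⟩
      have sub : ∀ p q : ℝ, p ∈ Set.Ioo a b → q ∈ Set.Ioo a b → ∀ t ∈ Set.Icc p q,
          t ∈ Set.Ioo a b :=
        fun p q hp hq t ht => ⟨hp.1.trans_le ht.1, ht.2.trans_lt hq.2⟩
      have rolle := fun (p q : ℝ) (hp : p ∈ Set.Ioo a b) (hq : q ∈ Set.Ioo a b) (hpq : p < q)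
          (he : p ^ 2 * ∑ m, c m / (p - φ m) ^ 2 - p + z
            = q ^ 2 * ∑ m, c m / (q - φ m) ^ 2 - q + z) =>
        exists_hasDerivAt_eq_zero hpq
          (f := fun lam : ℝ => lam ^ 2 * ∑ m, c m / (lam - φ m) ^ 2 - lam + z)
          (f' := fun x : ℝ => ∑ m, (-2 * c m * φ m * x / (x - φ m) ^ 3) - 1)
          (fun t ht => (aux_d1 φ c z t
            (hav t (sub p q hp hq t ht))).continuousAt.continuousWithinAt) he
          (fun t ht => aux_d1 φ c z t (hav t (sub p q hp hq t ⟨ht.1.le, ht.2.le⟩)))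
      obtain ⟨u, hu, hu0⟩ := rolle x y hx hy hxy (fx.trans fy.symm)
      obtain ⟨v, hv, hv0⟩ := rolle y w hy hw hyw (fy.trans fw.symm)
      have hu' := sub x y hx hy u ⟨hu.1.le, hu.2.le⟩
      have hv' := sub y w hy hw v ⟨hv.1.le, hv.2.le⟩
      obtain ⟨t, ht, ht0⟩ := exists_hasDerivAt_eq_zero (hu.2.trans hv.1)
          (f := fun x : ℝ => ∑ m, (-2 * c m * φ m * x / (x - φ m) ^ 3) - 1)
          (f' := fun x : ℝ => 2 * ∑ m, c m * φ m * (2 * x + φ m) / (x - φ m) ^ 4)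
          (fun t ht => (aux_d2 φ c t
            (hav t (sub u v hu' hv' t ht))).continuousAt.continuousWithinAt) (hu0.trans hv0.symm)
          (fun t ht => aux_d2 φ c t (hav t (sub u v hu' hv' t ⟨ht.1.le, ht.2.le⟩)))
      have ht' := sub u v hu' hv' t ⟨ht.1.le, ht.2.le⟩
      exact (aux_pos φ c hφ hc t (ha.trans_lt ht'.1) (hav t ht')).ne' ht0
    by_contra hcon
    have h3 : (3 : ℕ∞) ≤ Set.encard {lam : ℝ | lam ∈ Set.Ioo a b ∧
        lam ^ 2 * ∑ m, c m / (lam - φ m) ^ 2 - lam + z = 0} := by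
      have := Order.add_one_le_of_lt (not_le.mp hcon)
      norm_num at this
      simpa using this
    obtain ⟨T, hT, hT3⟩ := Set.exists_subset_encard_eq h3
    obtain ⟨p, q, r, hpq, hpr, hqr, rfl⟩ := Set.encard_eq_three.mp hT3
    obtain ⟨hp, fp⟩ := hT (show p ∈ ({p, q, r} : Set ℝ) by simp)
    obtain ⟨hq, fq⟩ := hT (show q ∈ ({p, q, r} : Set ℝ) by simp)
    obtain ⟨hr, fr⟩ := hT (show r ∈ ({p, q, r} : Set ℝ) by simp)
    rcases lt_or_gt_of_ne hpq with h1 | h1 <;> rcases lt_or_gt_of_ne hpr with h2 | h2 <;>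
      rcases lt_or_gt_of_ne hqr with h3 | h3
    · exact key p q r hp hr h1 h3 fp fq fr
    · exact key p r q hp hq h2 h3 fp fr fq
    · linarith
    · exact key r p q hr hq h2 h1 fr fp fq
    · exact key q p r hq hr h1 h2 fq fp fr
    · linarith
    · exact key q r p hq hp h3 h2 fq fr fp
    · exact key r q p hr hp h3 h1 fr fq fp
end

section
/- Unique root above the largest pole (Lemma 6, part 4): f is strictly decreasing on the interval (φ_max, ∞), and there exists exactly one λ ∈ (max(φ_max, z), ∞) with f(λ) = 0; this λ is the largest root of f. -/
/-- Unique root of the secular function above the largest pole (Lemma 6, part 4):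
`f` is strictly decreasing on `(φ_max, ∞)`, there is exactly one root of `f` in
`(max φ_max z, ∞)`, and this root is the largest (positive, pole-avoiding) root of
`f`. -/
theorem secular_unique_largest_root {ι : Type*} [Fintype ι] [Nonempty ι]
    (φ c : ι → ℝ) (hφ : ∀ m, 0 < φ m) (hc : ∀ m, 0 < c m)
    (z : ℝ) (hz : 0 ≤ z) :
    letI f : ℝ → ℝ := fun lam => lam ^ 2 * ∑ m, c m / (lam - φ m) ^ 2 - lam + z
    letI φmax : ℝ := Finset.univ.sup' Finset.univ_nonempty φ
    StrictAntiOn f (Set.Ioi φmax) ∧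
    (∃! lam : ℝ, lam ∈ Set.Ioi (max φmax z) ∧ f lam = 0) ∧
    (∀ lam : ℝ, lam ∈ Set.Ioi (max φmax z) → f lam = 0 →
      ∀ μ : ℝ, 0 < μ → (∀ m, μ ≠ φ m) → f μ = 0 → μ ≤ lam) := by
  set f : ℝ → ℝ := fun lam => lam ^ 2 * ∑ m, c m / (lam - φ m) ^ 2 - lam + z with hfdef
  set φmax : ℝ := Finset.univ.sup' Finset.univ_nonempty φ with hφmax
  have hle : ∀ m, φ m ≤ φmax := fun m => Finset.le_sup' φ (Finset.mem_univ m)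
  obtain ⟨m0, -, hm0⟩ := Finset.exists_mem_eq_sup' (Finset.univ_nonempty (α := ι)) φ
  have hm0' : φmax = φ m0 := hm0
  have hpos : 0 < φmax := hm0' ▸ hφ m0
  have hf : ∀ x, f x = (∑ m, x ^ 2 * (c m / (x - φ m) ^ 2)) - x + z := by
    intro x
    simp only [f, Finset.mul_sum]
  have hanti : StrictAntiOn f (Set.Ioi φmax) := by
    intro x hx y hy hxy
    simp only [Set.mem_Ioi] at hx hy
    rw [hf, hf]
    have : (∑ m, y ^ 2 * (c m / (y - φ m) ^ 2)) ≤ ∑ m, x ^ 2 * (c m / (x - φ m) ^ 2) := by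
      apply Finset.sum_le_sum
      intro m _
      have h1 : 0 < x - φ m := by linarith [hle m]
      have h2 : 0 < y - φ m := by linarith [hle m]
      have h3 : y / (y - φ m) ≤ x / (x - φ m) := by
        rw [div_le_div_iff₀ h2 h1]
        nlinarith [hφ m]
      have h4 : 0 ≤ y / (y - φ m) := div_nonneg (by linarith) h2.le
      have h5 := pow_le_pow_left₀ h4 h3 2
      have e : ∀ w : ℝ, w ^ 2 * (c m / (w - φ m) ^ 2) = c m * (w / (w - φ m)) ^ 2 := by
        intro w
        rw [div_pow]; ring
      rw [e, e]
      exact mul_le_mul_of_nonneg_left h5 (hc m).le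
    linarith
  have hcont : ContinuousOn f (Set.Ioi φmax) := by
    apply ContinuousOn.add _ continuousOn_const
    apply ContinuousOn.sub _ continuousOn_id
    apply ContinuousOn.mul (by fun_prop)
    apply continuousOn_finsetSum
    intro m _
    apply ContinuousOn.div (by fun_prop) (by fun_prop)
    intro x hx
    have : 0 < x - φ m := by linarith [hle m, Set.mem_Ioi.1 hx]
    positivity
  have hA : ∃ a ∈ Set.Ioi φmax, 0 ≤ f a := by
    have hp : 0 < φmax * c m0 := mul_pos hpos (hc m0)
    obtain ⟨t, ht, htp⟩ : ∃ t : ℝ, 0 < t ∧ t ^ 2 = φmax * c m0 :=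
      ⟨√(φmax * c m0), Real.sqrt_pos.2 hp, Real.sq_sqrt hp.le⟩
    refine ⟨φmax + t, by simpa using ht, ?_⟩
    rw [hf]
    have h1 : (φmax + t) ^ 2 * (c m0 / (φmax + t - φ m0) ^ 2) ≤
        ∑ m, (φmax + t) ^ 2 * (c m / (φmax + t - φ m) ^ 2) := by
      apply Finset.single_le_sum (f := fun m => (φmax + t) ^ 2 * (c m / (φmax + t - φ m) ^ 2))
        _ (Finset.mem_univ m0)
      intro m _
      have := (hc m).le
      positivity
    have h2 : φmax + t ≤ (φmax + t) ^ 2 * (c m0 / (φmax + t - φ m0) ^ 2) := by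
      rw [← hm0', add_sub_cancel_left, ← mul_div_assoc, le_div_iff₀ (by positivity), htp]
      nlinarith [hc m0, mul_pos (add_pos hpos ht) (mul_pos ht (hc m0))]
    linarith
  have hB : ∃ b ∈ Set.Ioi φmax, f b ≤ 0 := by
    have hs : 0 ≤ ∑ m, c m := Finset.sum_nonneg fun m _ => (hc m).le
    obtain ⟨b, hb⟩ : ∃ b, b = 2 * φmax + 4 * ∑ m, c m + z := ⟨_, rfl⟩
    have hb1 : 2 * φmax ≤ b := by linarith
    refine ⟨b, by simp only [Set.mem_Ioi]; linarith, ?_⟩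
    rw [hf]
    have h1 : ∑ m, b ^ 2 * (c m / (b - φ m) ^ 2) ≤ ∑ m, 4 * c m := by
      apply Finset.sum_le_sum
      intro m _
      have h2 : 0 < b - φ m := by linarith [hle m]
      rw [← mul_div_assoc, div_le_iff₀ (by positivity)]
      have h3 : b ^ 2 ≤ (2 * (b - φ m)) ^ 2 :=
        pow_le_pow_left₀ (by linarith) (by linarith [hle m]) 2
      nlinarith [hc m, mul_le_mul_of_nonneg_right h3 (hc m).le]
    have h9 : ∑ m, 4 * c m = 4 * ∑ m, c m := (Finset.mul_sum _ _ _).symm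
    linarith
  refine ⟨hanti, ?_, ?_⟩
  · obtain ⟨a, ha, ha0⟩ := hA
    obtain ⟨b, hb, hb0⟩ := hB
    obtain ⟨x, hx, hx0⟩ := isPreconnected_Ioi.intermediate_value hb ha hcont ⟨hb0, ha0⟩
    have hxp : φmax < x := hx
    have hxz : z < x := by
      rw [hf] at hx0
      have : 0 < ∑ m, x ^ 2 * (c m / (x - φ m) ^ 2) := by
        apply Finset.sum_pos _ Finset.univ_nonempty
        intro m _
        have h1 : 0 < x - φ m := by linarith [hle m]
        have h2 : 0 < x := by linarith
        have := hc m
        positivity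
      linarith
    refine ⟨x, ⟨max_lt hxp hxz, hx0⟩, ?_⟩
    rintro y ⟨hy, hy0⟩
    have hy' : φmax < y := lt_of_le_of_lt (le_max_left _ _) hy
    exact hanti.injOn hy' hx (hy0.trans hx0.symm)
  · intro x hx hx0 μ _ _ hμ0
    by_contra hlt
    push Not at hlt
    have hx' : φmax < x := lt_of_le_of_lt (le_max_left _ _) hx
    have := hanti hx' (hx'.trans hlt) hlt
    linarith
end

section
/- Monotonicity of the objective over roots within one pole-free interval (Lemma 7): if 0 < λ₁ ≤ λ₂, f(λ₁) = f(λ₂) = 0, and no φ_m lies in the closed interval [λ₁, λ₂], then g(λ₁) ≥ g(λ₂). -/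
/-- Monotonicity of the objective over roots within one pole-free interval (Lemma 7):
if `0 < λ₁ ≤ λ₂` are roots of the secular function
`f(λ) = λ² Σ_m c_m/(λ - φ_m)² - λ + z` and no pole `φ_m` lies in `[λ₁, λ₂]`, then
`g(λ₁) ≥ g(λ₂)` for the objective `g(λ) = 1 - Σ_m c_m/(λ - φ_m) - z/λ - log λ`. -/
theorem objective_monotone_roots_same_interval {ι : Type*} [Fintype ι] [Nonempty ι]
    (φ c : ι → ℝ) (hφ : ∀ m, 0 < φ m) (hc : ∀ m, 0 < c m)
    (z : ℝ) (hz : 0 ≤ z)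
    (lam₁ lam₂ : ℝ) (h1 : 0 < lam₁) (h12 : lam₁ ≤ lam₂)
    (hroot₁ : lam₁ ^ 2 * ∑ m, c m / (lam₁ - φ m) ^ 2 - lam₁ + z = 0)
    (hroot₂ : lam₂ ^ 2 * ∑ m, c m / (lam₂ - φ m) ^ 2 - lam₂ + z = 0)
    (hpoles : ∀ m, φ m ∉ Set.Icc lam₁ lam₂) :
    1 - ∑ m, c m / (lam₂ - φ m) - z / lam₂ - Real.log lam₂
      ≤ 1 - ∑ m, c m / (lam₁ - φ m) - z / lam₁ - Real.log lam₁ := by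
  have h2 : 0 < lam₂ := lt_of_lt_of_le h1 h12
  have hs : 0 < lam₁ + lam₂ := by linarith
  have hlog : 2 * (lam₂ - lam₁) / (lam₁ + lam₂) ≤ Real.log lam₂ - Real.log lam₁ := by
    have h := Real.le_log_one_add_of_nonneg (x := (lam₂ - lam₁) / lam₁)
      (div_nonneg (by linarith) h1.le)
    have e1 : 1 + (lam₂ - lam₁) / lam₁ = lam₂ / lam₁ := by field_simp; ring
    have e2 : 2 * ((lam₂ - lam₁) / lam₁) / ((lam₂ - lam₁) / lam₁ + 2)
        = 2 * (lam₂ - lam₁) / (lam₁ + lam₂) := by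
      have e3 : (lam₂ - lam₁) / lam₁ + 2 = (lam₁ + lam₂) / lam₁ := by field_simp; ring
      rw [e3]; field_simp
    rw [e1, e2, Real.log_div h2.ne' h1.ne'] at h
    exact h
  have hterm : ∀ m, c m / (lam₁ - φ m) - c m / (lam₂ - φ m) ≤
      (lam₂ - lam₁) / (lam₁ + lam₂) *
        (lam₁ * (c m / (lam₁ - φ m) ^ 2) + lam₂ * (c m / (lam₂ - φ m) ^ 2)) := by
    intro m
    have hab : 0 < (lam₁ - φ m) * (lam₂ - φ m) := by
      by_cases h : φ m < lam₁
      · exact mul_pos (by linarith) (by linarith)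
      · have : lam₂ < φ m := by
          by_contra h'
          exact hpoles m ⟨not_lt.1 h, not_lt.1 h'⟩
        exact mul_pos_of_neg_of_neg (by linarith) (by linarith)
    have ha : lam₁ - φ m ≠ 0 := left_ne_zero_of_mul hab.ne'
    have hb : lam₂ - φ m ≠ 0 := right_ne_zero_of_mul hab.ne'
    have key : (lam₂ - lam₁) / (lam₁ + lam₂) *
        (lam₁ * (c m / (lam₁ - φ m) ^ 2) + lam₂ * (c m / (lam₂ - φ m) ^ 2))
        - (c m / (lam₁ - φ m) - c m / (lam₂ - φ m)) =
        c m * φ m * (lam₂ - lam₁) ^ 2 * (lam₂ - lam₁) /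
          ((lam₁ + lam₂) * ((lam₁ - φ m) * (lam₂ - φ m)) ^ 2) := by
      field_simp
      ring
    have : 0 ≤ c m * φ m * (lam₂ - lam₁) ^ 2 * (lam₂ - lam₁) /
          ((lam₁ + lam₂) * ((lam₁ - φ m) * (lam₂ - φ m)) ^ 2) := by
      have := hc m
      have := hφ m
      have : 0 ≤ lam₂ - lam₁ := by linarith
      positivity
    linarith
  have hsum := Finset.sum_le_sum (fun m (_ : m ∈ Finset.univ) => hterm m)
  rw [Finset.sum_sub_distrib, ← Finset.mul_sum, Finset.sum_add_distrib, ← Finset.mul_sum,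
    ← Finset.mul_sum] at hsum
  generalize (∑ m, c m / (lam₁ - φ m) ^ 2) = T₁ at *
  generalize (∑ m, c m / (lam₂ - φ m) ^ 2) = T₂ at *
  have t1 : lam₁ * T₁ = 1 - z / lam₁ := by field_simp; linarith
  have t2 : lam₂ * T₂ = 1 - z / lam₂ := by field_simp; linarith
  have e : (lam₂ - lam₁) / (lam₁ + lam₂) * (lam₁ * T₁ + lam₂ * T₂) =
      2 * (lam₂ - lam₁) / (lam₁ + lam₂) - (z / lam₁ - z / lam₂) := by
    rw [t1, t2]; field_simp; ring
  linarith
end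

section
/- Monotonicity of the objective over roots separated by poles (Lemma 8): if 0 < λ₁ < λ₂, λ₁ ∉ {φ_m : m ∈ S}, λ₂ ∉ {φ_m : m ∈ S}, f(λ₁) = f(λ₂) = 0, and there exists at least one m ∈ S with λ₁ < φ_m < λ₂, then g(λ₁) > g(λ₂). -/
/-- Monotonicity of the objective over roots separated by poles (Lemma 8): if
`0 < λ₁ < λ₂` avoid the poles, both are roots of the secular function
`f(λ) = λ² Σ_m c_m/(λ - φ_m)² - λ + z`, and at least one pole `φ_m` lies strictly
between `λ₁` and `λ₂`, then `g(λ₁) > g(λ₂)` for the objective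
`g(λ) = 1 - Σ_m c_m/(λ - φ_m) - z/λ - log λ`. -/
theorem objective_monotone_roots_across_poles {ι : Type*} [Fintype ι] [Nonempty ι]
    (φ c : ι → ℝ) (hφ : ∀ m, 0 < φ m) (hc : ∀ m, 0 < c m)
    (z : ℝ) (hz : 0 ≤ z)
    (lam₁ lam₂ : ℝ) (h1 : 0 < lam₁) (h12 : lam₁ < lam₂)
    (hnp₁ : ∀ m, lam₁ ≠ φ m) (hnp₂ : ∀ m, lam₂ ≠ φ m)
    (hroot₁ : lam₁ ^ 2 * ∑ m, c m / (lam₁ - φ m) ^ 2 - lam₁ + z = 0)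
    (hroot₂ : lam₂ ^ 2 * ∑ m, c m / (lam₂ - φ m) ^ 2 - lam₂ + z = 0)
    (hsep : ∃ m, lam₁ < φ m ∧ φ m < lam₂) :
    1 - ∑ m, c m / (lam₂ - φ m) - z / lam₂ - Real.log lam₂
      < 1 - ∑ m, c m / (lam₁ - φ m) - z / lam₁ - Real.log lam₁ := by
  have h2 : 0 < lam₂ := h1.trans h12
  have hd : 0 < lam₂ - lam₁ := sub_pos.2 h12
  have hs : 0 < lam₁ + lam₂ := by positivity
  have hlog : 2 * (lam₂ - lam₁) / (lam₁ + lam₂) ≤ Real.log lam₂ - Real.log lam₁ := by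
    have h := Real.le_log_one_add_of_nonneg (x := (lam₂ - lam₁) / lam₁) (by positivity)
    have e1 : 1 + (lam₂ - lam₁) / lam₁ = lam₂ / lam₁ := by field_simp; ring
    have e2 : 2 * ((lam₂ - lam₁) / lam₁) / ((lam₂ - lam₁) / lam₁ + 2)
        = 2 * (lam₂ - lam₁) / (lam₁ + lam₂) := by
      have e3 : (lam₂ - lam₁) / lam₁ + 2 = (lam₁ + lam₂) / lam₁ := by field_simp; ring
      rw [e3]; field_simp
    rw [e1, e2, Real.log_div h2.ne' h1.ne'] at h
    exact h
  set A := ∑ m, c m / (lam₁ - φ m) ^ 2 with hA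
  set B := ∑ m, c m / (lam₂ - φ m) ^ 2 with hB
  have key : ∑ m, c m / (lam₁ - φ m) - ∑ m, c m / (lam₂ - φ m)
      < (lam₂ - lam₁) / (lam₁ + lam₂) * (lam₁ * A + lam₂ * B) := by
    rw [hA, hB, Finset.mul_sum, Finset.mul_sum, ← Finset.sum_add_distrib, Finset.mul_sum,
      ← Finset.sum_sub_distrib]
    apply Finset.sum_lt_sum_of_nonempty Finset.univ_nonempty
    intro m _
    have n1 : lam₁ - φ m ≠ 0 := sub_ne_zero.2 (hnp₁ m)
    have n2 : lam₂ - φ m ≠ 0 := sub_ne_zero.2 (hnp₂ m)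
    have e : (lam₂ - lam₁) / (lam₁ + lam₂) *
        (lam₁ * (c m / (lam₁ - φ m) ^ 2) + lam₂ * (c m / (lam₂ - φ m) ^ 2))
        - (c m / (lam₁ - φ m) - c m / (lam₂ - φ m))
        = c m * φ m * (lam₂ - lam₁) ^ 3 /
          ((lam₁ + lam₂) * (lam₁ - φ m) ^ 2 * (lam₂ - φ m) ^ 2) := by
      field_simp
      ring
    have p : 0 < c m * φ m * (lam₂ - lam₁) ^ 3 /
          ((lam₁ + lam₂) * (lam₁ - φ m) ^ 2 * (lam₂ - φ m) ^ 2) := by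
      have := hc m
      have := hφ m
      positivity
    linarith
  have eA : lam₁ * A = 1 - z / lam₁ := by
    field_simp
    linarith
  have eB : lam₂ * B = 1 - z / lam₂ := by
    field_simp
    linarith
  rw [eA, eB] at key
  have e : (lam₂ - lam₁) / (lam₁ + lam₂) * (1 - z / lam₁ + (1 - z / lam₂))
      = 2 * (lam₂ - lam₁) / (lam₁ + lam₂) - (z / lam₁ - z / lam₂) := by
    field_simp
    ring
  linarith
end
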